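/- arXiv:1712.06268 — 2 statements merged into one kernel-verified Lean document; each statement's English description precedes it below -/
import Mathlib

section
/- For any y₀ ∈ ℝⁿ with Dg(y₀) ≠ 0, one has limsup t̄ₛ(y) = limsup tₛ(y) = t̄ₛ(y₀), where the limsups are taken in the extended reals [0,∞] as y → y₀ restricted to the set {y : g(y) > g(y₀)} (i.e., along the filter of neighborhoods of y₀ intersected with {g > g(y₀)}, which is nontrivial since Dg(y₀) ≠ 0). -/
open scoped InnerProductSpace Topology ENNReal
open Filter

noncomputable section

/-- Euclidean space `ℝⁿ`. -/
abbrev Euc (n : ℕ) := EuclideanSpace ℝ (Fin n)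

/-- Hopf–Lax solution of the Eikonal equation `uₜ + |∇u| = 0` with initial data `g`:
`u(x,t) = min {g(y) : |y - x| ≤ t}`. -/
def HLu {n : ℕ} (g : Euc n → ℝ) (x : Euc n) (t : ℝ) : ℝ :=
  sInf (g '' Metric.closedBall x t)

/-- The set of minimizers `L(x,t) = {y : |y - x| ≤ t ∧ g y = u(x,t)}`. -/
def HLL {n : ℕ} (g : Euc n → ℝ) (x : Euc n) (t : ℝ) : Set (Euc n) :=
  {y | ‖y - x‖ ≤ t ∧ g y = HLu g x t}

/-- The characteristic from `y₀`: `X(y₀,t) = y₀ + t • Dg(y₀)/|Dg(y₀)|`. -/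
def charX {n : ℕ} (Dg : Euc n → Euc n) (y₀ : Euc n) (t : ℝ) : Euc n :=
  y₀ + t • (‖Dg y₀‖⁻¹ • Dg y₀)

/-- First termination time `t̄ₛ(y₀) = sup {t > 0 : L(X(y₀,t),t) = {y₀}}`, in `[0,∞]`
(`sup ∅ = 0`). -/
def tbar {n : ℕ} (g : Euc n → ℝ) (Dg : Euc n → Euc n) (y₀ : Euc n) : ℝ≥0∞ :=
  sSup (ENNReal.ofReal '' {t : ℝ | 0 < t ∧ HLL g (charX Dg y₀ t) t = {y₀}})

/-- Second termination time `tₛ(y₀) = inf {t > 0 : y₀ ∉ L(X(y₀,t),t)}`, in `[0,∞]`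
(`inf ∅ = ∞`). -/
def tsnd {n : ℕ} (g : Euc n → ℝ) (Dg : Euc n → Euc n) (y₀ : Euc n) : ℝ≥0∞ :=
  sInf (ENNReal.ofReal '' {t : ℝ | 0 < t ∧ y₀ ∉ HLL g (charX Dg y₀ t) t})

/-- Membership in the closed ball in the tangent form. -/
def TB {n : ℕ} (Dg : Euc n → Euc n) (y : Euc n) (t : ℝ) (z : Euc n) : Prop :=
  ‖z - y‖ ^ 2 ≤ 2 * t * ⟪z - y, ‖Dg y‖⁻¹ • Dg y⟫_ℝ

lemma norm_nu {n : ℕ} {v : Euc n} (h : v ≠ 0) : ‖‖v‖⁻¹ • v‖ = 1 := by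
  have : ‖v‖ ≠ 0 := norm_ne_zero_iff.2 h
  rw [norm_smul, norm_inv, norm_norm, inv_mul_cancel₀ this]

lemma sq_charX {n : ℕ} (Dg : Euc n → Euc n) (y z : Euc n) (h : Dg y ≠ 0) (t : ℝ) :
    ‖z - charX Dg y t‖ ^ 2 =
      ‖z - y‖ ^ 2 - 2 * t * ⟪z - y, ‖Dg y‖⁻¹ • Dg y⟫_ℝ + t ^ 2 := by
  have e : z - charX Dg y t = (z - y) - t • (‖Dg y‖⁻¹ • Dg y) := by
    unfold charX; abel
  rw [e, norm_sub_sq_real, norm_smul, norm_nu h, inner_smul_right]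
  simp
  ring

lemma mem_cb_iff {n : ℕ} (Dg : Euc n → Euc n) (y z : Euc n) (h : Dg y ≠ 0) {t : ℝ} (ht : 0 < t) :
    ‖z - charX Dg y t‖ ≤ t ↔ TB Dg y t z := by
  rw [← sq_le_sq₀ (norm_nonneg _) ht.le, sq_charX Dg y z h]
  unfold TB
  constructor <;> intro h <;> linarith

lemma mem_b_iff {n : ℕ} (Dg : Euc n → Euc n) (y z : Euc n) (h : Dg y ≠ 0) {t : ℝ} (ht : 0 < t) :
    ‖z - charX Dg y t‖ < t ↔ ‖z - y‖ ^ 2 < 2 * t * ⟪z - y, ‖Dg y‖⁻¹ • Dg y⟫_ℝ := by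
  rw [← sq_lt_sq₀ (norm_nonneg _) ht.le, sq_charX Dg y z h]
  constructor <;> intro h <;> linarith

lemma TB_strict {n : ℕ} {Dg : Euc n → Euc n} {y z : Euc n} {s t : ℝ} (hs : 0 < s)
    (hst : s < t) (hz : TB Dg y s z) (hne : z ≠ y) :
    ‖z - y‖ ^ 2 < 2 * t * ⟪z - y, ‖Dg y‖⁻¹ • Dg y⟫_ℝ := by
  unfold TB at hz
  have h1 : 0 < ‖z - y‖ := norm_pos_iff.2 (sub_ne_zero.2 hne)
  have h2 : 0 < ‖z - y‖ ^ 2 := by positivity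
  have h3 : 0 < ⟪z - y, ‖Dg y‖⁻¹ • Dg y⟫_ℝ := by
    by_contra hc
    push Not at hc
    nlinarith
  nlinarith

lemma TB_mono {n : ℕ} {Dg : Euc n → Euc n} {y z : Euc n} {s t : ℝ} (hs : 0 < s)
    (hst : s ≤ t) (hz : TB Dg y s z) : TB Dg y t z := by
  rcases hst.eq_or_lt with rfl | hlt
  · exact hz
  by_cases hne : z = y
  · subst hne; simp [TB]
  · exact (TB_strict hs hlt hz hne).le

lemma TB_self {n : ℕ} {Dg : Euc n → Euc n} {y : Euc n} {s : ℝ} : TB Dg y s y := by simp [TB]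

lemma HLu_le {n : ℕ} {g : Euc n → ℝ} (hc : Continuous g) {x z : Euc n} {t : ℝ}
    (hz : ‖z - x‖ ≤ t) : HLu g x t ≤ g z := by
  apply csInf_le
  · exact ((isCompact_closedBall x t).image hc).bddBelow
  · exact ⟨z, by simpa [dist_eq_norm] using hz, rfl⟩

lemma mem_HLL_iff {n : ℕ} {g : Euc n → ℝ} (hc : Continuous g) {x y : Euc n} {t : ℝ} :
    y ∈ HLL g x t ↔ ‖y - x‖ ≤ t ∧ ∀ z, ‖z - x‖ ≤ t → g y ≤ g z := by
  constructor
  · rintro ⟨h1, h2⟩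
    exact ⟨h1, fun z hz => h2 ▸ HLu_le hc hz⟩
  · rintro ⟨h1, h2⟩
    refine ⟨h1, le_antisymm ?_ (HLu_le hc h1)⟩
    apply le_csInf
    · exact ⟨g y, y, by simpa [dist_eq_norm] using h1, rfl⟩
    · rintro _ ⟨z, hz, rfl⟩
      exact h2 z (by simpa [dist_eq_norm] using hz)

lemma mem_L {n : ℕ} {g : Euc n → ℝ} (hc : Continuous g) {Dg : Euc n → Euc n} {y : Euc n}
    (h : Dg y ≠ 0) {t : ℝ} (ht : 0 < t) :
    y ∈ HLL g (charX Dg y t) t ↔ ∀ z, TB Dg y t z → g y ≤ g z := by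
  rw [mem_HLL_iff hc]
  simp only [mem_cb_iff Dg y _ h ht, TB_self, true_and]

lemma eq_L {n : ℕ} {g : Euc n → ℝ} (hc : Continuous g) {Dg : Euc n → Euc n} {y : Euc n}
    (h : Dg y ≠ 0) {t : ℝ} (ht : 0 < t) :
    HLL g (charX Dg y t) t = {y} ↔ ∀ z, TB Dg y t z → z ≠ y → g y < g z := by
  constructor
  · intro he z hz hne
    have hy : y ∈ HLL g (charX Dg y t) t := by rw [he]; rfl
    have h1 := (mem_L hc h ht).1 hy
    refine lt_of_le_of_ne (h1 z hz) fun heq => hne ?_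
    have : z ∈ HLL g (charX Dg y t) t := ⟨(mem_cb_iff Dg y z h ht).2 hz, heq ▸ hy.2⟩
    rw [he] at this
    exact this
  · intro hq
    have hy : y ∈ HLL g (charX Dg y t) t := by
      rw [mem_L hc h ht]
      intro z hz
      by_cases hne : z = y
      · rw [hne]
      · exact (hq z hz hne).le
    ext z
    constructor
    · intro hz
      by_contra hne
      have := hq z ((mem_cb_iff Dg y z h ht).1 hz.1) hne
      rw [hz.2, hy.2] at this
      exact lt_irrefl _ this
    · rintro rfl
      exact hy

lemma tbar_le_tsnd {n : ℕ} {g : Euc n → ℝ} (hc : Continuous g) {Dg : Euc n → Euc n} {y : Euc n}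
    (h : Dg y ≠ 0) : tbar g Dg y ≤ tsnd g Dg y := by
  apply sSup_le
  rintro _ ⟨t, ⟨ht, h1⟩, rfl⟩
  apply le_sInf
  rintro _ ⟨s, ⟨hs, h2⟩, rfl⟩
  apply ENNReal.ofReal_le_ofReal
  by_contra hlt
  push Not at hlt
  apply h2
  rw [mem_L hc h hs]
  intro z hz
  rw [eq_L hc h ht] at h1
  by_cases hne : z = y
  · rw [hne]
  · exact (h1 z (TB_mono hs hlt.le hz) hne).le

lemma limsup_tsnd_le {n : ℕ} {g : Euc n → ℝ} (hc : Continuous g) {Dg : Euc n → Euc n}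
    (hDg : Continuous Dg) {y₀ : Euc n} (hy : Dg y₀ ≠ 0) :
    Filter.limsup (fun y => tsnd g Dg y) (𝓝[{y | g y₀ < g y}] y₀) ≤ tbar g Dg y₀ := by
  by_contra hlt
  push Not at hlt
  obtain ⟨T, hT1, hT2⟩ := exists_between hlt
  obtain ⟨S, hS1, hS2⟩ := exists_between hT1
  have hTtop : T ≠ ⊤ := ne_top_of_lt hT2
  have hStop : S ≠ ⊤ := ne_top_of_lt hS2
  have hS0 : 0 < S.toReal := ENNReal.toReal_pos (ne_bot_of_gt hS1) hStop
  have hST : S.toReal < T.toReal := (ENNReal.toReal_lt_toReal hStop hTtop).2 hS2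
  have hT0 := hS0.trans hST
  apply absurd hS1
  push Not
  rw [← ENNReal.ofReal_toReal hStop]
  apply le_sSup
  refine ⟨_, ⟨hS0, ?_⟩, rfl⟩
  rw [eq_L hc hy hS0]
  intro z hz hne
  have hst := TB_strict hS0 hST hz hne
  have hfr := frequently_lt_of_lt_limsup (by isBoundedDefault) hT2
  have hcn : ContinuousAt (fun y => ‖Dg y‖⁻¹ • Dg y) y₀ :=
    (hDg.norm.continuousAt.inv₀ (norm_ne_zero_iff.2 hy)).smul hDg.continuousAt
  have c1 : ContinuousAt (fun y => ‖z - y‖ ^ 2) y₀ := by fun_prop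
  have c2 : ContinuousAt (fun y => 2 * T.toReal * ⟪z - y, ‖Dg y‖⁻¹ • Dg y⟫_ℝ) y₀ :=
    continuousAt_const.mul (ContinuousAt.inner (𝕜 := ℝ) (continuousAt_const.sub continuousAt_id) hcn)
  have ev1 : ∀ᶠ y in 𝓝 y₀, ‖z - y‖ ^ 2 < 2 * T.toReal * ⟪z - y, ‖Dg y‖⁻¹ • Dg y⟫_ℝ :=
    c1.eventually_lt c2 hst
  have ev2 : ∀ᶠ y in 𝓝 y₀, Dg y ≠ 0 := hDg.continuousAt.eventually_ne hy
  have ev3 : ∀ᶠ y in 𝓝[{y | g y₀ < g y}] y₀, g y₀ < g y := self_mem_nhdsWithin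
  obtain ⟨y, hyT, hy1, hy2, hy3⟩ := (hfr.and_eventually
    ((ev1.filter_mono nhdsWithin_le_nhds).and
      ((ev2.filter_mono nhdsWithin_le_nhds).and ev3))).exists
  refine lt_of_lt_of_le hy3 ?_
  by_contra hcon
  apply absurd hyT
  push Not
  rw [← ENNReal.ofReal_toReal hTtop]
  apply sInf_le
  refine ⟨_, ⟨hT0, ?_⟩, rfl⟩
  rw [mem_L hc hy2 hT0]
  intro hall
  exact hcon (hall z hy1.le)

lemma center_eq {n : ℕ} {g : Euc n → ℝ} {Dg : Euc n → Euc n}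
    (hg : ∀ y, HasGradientAt g (Dg y) y) {c y : Euc n} {r : ℝ} (hr : 0 < r)
    (hyc : ‖y - c‖ ≤ r) (hmin : ∀ z, ‖z - c‖ ≤ r → g y ≤ g z) (h : Dg y ≠ 0) :
    c = charX Dg y r := by
  set ν := ‖Dg y‖⁻¹ • Dg y with hν
  have hν1 : ‖ν‖ = 1 := norm_nu h
  have hpos : 0 < ‖Dg y‖ := norm_pos_iff.2 h
  have hw : c - r • ν ∈ Metric.closedBall c r := by
    simp [dist_eq_norm, norm_smul, hν1, abs_of_pos hr]
  have hym : y ∈ Metric.closedBall c r := by simpa [dist_eq_norm] using hyc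
  have hm : IsMinOn g (Metric.closedBall c r) y := by
    intro z hz
    exact hmin z (by simpa [dist_eq_norm] using hz)
  have hin := hm.localize.hasFDerivWithinAt_nonneg (hg y).hasFDerivAt.hasFDerivWithinAt
    (sub_mem_posTangentConeAt_of_segment_subset
      ((convex_closedBall c r).segment_subset hym hw))
  simp only [InnerProductSpace.toDual_apply_apply] at hin
  have hin2 : 0 ≤ ⟪ν, c - r • ν - y⟫_ℝ := by
    rw [hν, real_inner_smul_left]
    exact mul_nonneg (by positivity) hin
  have e1 : c - r • ν - y = (c - y) - r • ν := by abel
  rw [e1, inner_sub_right, inner_smul_right, real_inner_self_eq_norm_sq, hν1] at hin2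
  have hcy : ‖c - y‖ ^ 2 ≤ r ^ 2 := by
    rw [norm_sub_rev] ; gcongr
  have hsq : ‖(c - y) - r • ν‖ ^ 2 ≤ 0 := by
    rw [norm_sub_sq_real, norm_smul, hν1, inner_smul_right, real_inner_comm]
    simp only [Real.norm_eq_abs, mul_one, sq_abs]
    nlinarith
  have h0 : (c - y) - r • ν = 0 := by
    rw [← norm_eq_zero]
    exact pow_eq_zero_iff (two_ne_zero) |>.1 (le_antisymm hsq (by positivity))
  unfold charX
  rw [← hν, ← sub_eq_zero, ← h0]
  abel

lemma le_limsup_tbar {n : ℕ} {g : Euc n → ℝ} (hc : Continuous g) {Dg : Euc n → Euc n}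
    (hg : ∀ y, HasGradientAt g (Dg y) y)
    (hDg : Continuous Dg) {y₀ : Euc n} (hy : Dg y₀ ≠ 0) :
    tbar g Dg y₀ ≤ Filter.limsup (fun y => tbar g Dg y) (𝓝[{y | g y₀ < g y}] y₀) := by
  apply le_of_forall_lt
  intro a' ha'
  obtain ⟨a, haa, ha⟩ := exists_between ha'
  refine lt_of_lt_of_le haa ?_
  refine le_limsup_of_frequently_le ?_ (by isBoundedDefault)
  obtain ⟨_, ⟨t, ⟨ht, hL⟩, rfl⟩, hat⟩ := lt_sSup_iff.1 ha
  rw [eq_L hc hy ht] at hL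
  rw [frequently_nhdsWithin_iff, frequently_iff]
  intro U' hU'
  have hU2 : U' ∩ {y | Dg y ≠ 0} ∈ 𝓝 y₀ :=
    inter_mem hU' (hDg.continuousAt.eventually_ne hy)
  obtain ⟨U, hUs, hUo, hyU⟩ := mem_nhds_iff.1 hU2
  set c := charX Dg y₀ t with hcdef
  have hK : IsCompact (Metric.closedBall c t \ U) := (isCompact_closedBall c t).diff hUo
  have hKm : ∃ m, g y₀ < m ∧ ∀ z ∈ Metric.closedBall c t \ U, m ≤ g z := by
    rcases (Metric.closedBall c t \ U).eq_empty_or_nonempty with he | hne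
    · exact ⟨g y₀ + 1, by linarith, by simp [he]⟩
    · obtain ⟨z, hz, hzm⟩ := hK.exists_isMinOn hne hc.continuousOn
      refine ⟨g z, hL z ?_ ?_, fun w hw => hzm hw⟩
      · rw [← mem_cb_iff Dg y₀ z hy ht]
        simpa [dist_eq_norm] using hz.1
      · rintro rfl
        exact hz.2 hyU
  obtain ⟨m, hm0, hm⟩ := hKm
  set ν := ‖Dg y₀‖⁻¹ • Dg y₀ with hν
  have hν1 : ‖ν‖ = 1 := norm_nu hy
  have ev1 : ∀ᶠ r in 𝓝 t, a < ENNReal.ofReal r :=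
    (ENNReal.continuous_ofReal.tendsto t).eventually_const_lt hat
  have ev2 : ∀ᶠ r in 𝓝 t, g (c - r • ν) < m := by
    have hcc : ContinuousAt (fun r : ℝ => g (c - r • ν)) t := by fun_prop
    refine hcc.eventually_lt_const ?_
    have : c - t • ν = y₀ := by rw [hcdef, charX]; abel
    simpa only [this] using hm0
  have ev3 : ∀ᶠ r in 𝓝 t, 0 < r := lt_mem_nhds ht
  obtain ⟨r, ⟨hr1, hr2, hr0⟩, hrt⟩ := (((ev1.and (ev2.and ev3)).filter_mono
    (nhdsWithin_le_nhds (s := Set.Iio t))).and self_mem_nhdsWithin).exists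
  have hrt : r < t := hrt
  have hwr : ‖(c - r • ν) - c‖ ≤ r := by
    simp [norm_smul, hν1, abs_of_pos hr0]
  obtain ⟨y, hyb, hymin⟩ := (isCompact_closedBall c r).exists_isMinOn
    ⟨c, by simp [hr0.le]⟩ hc.continuousOn
  have hyb' : ‖y - c‖ ≤ r := by simpa [dist_eq_norm] using hyb
  have hmin : ∀ z, ‖z - c‖ ≤ r → g y ≤ g z := fun z hz =>
    hymin (by simpa [dist_eq_norm] using hz)
  have hU : ∀ z, ‖z - c‖ ≤ r → g z ≤ g y → z ∈ U := by
    intro z hz hzy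
    by_contra hzU
    have h1 := hm z ⟨by simpa [dist_eq_norm] using hz.trans hrt.le, hzU⟩
    have h2 := hmin _ hwr
    linarith
  have hyUU := hUs (hU y hyb' le_rfl)
  have hyD : Dg y ≠ 0 := hyUU.2
  have hcy : c = charX Dg y r := center_eq hg hr0 hyb' hmin hyD
  refine ⟨y, hyUU.1, ?_, ?_⟩
  · refine hr1.le.trans ?_
    apply le_of_forall_lt
    intro b hb
    have hbtop : b ≠ ⊤ := ne_top_of_lt hb
    obtain ⟨s', hs1, hs2⟩ := exists_between hb
    have hs0 : 0 < s'.toReal := ENNReal.toReal_pos (ne_bot_of_gt hs1) (ne_top_of_lt hs2)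
    have hsr : s'.toReal < r := by
      rw [← ENNReal.ofReal_toReal (ne_top_of_lt hs2)] at hs2
      exact (ENNReal.ofReal_lt_ofReal_iff hr0).1 hs2
    refine hs1.trans_le ?_
    rw [← ENNReal.ofReal_toReal (ne_top_of_lt hs2)]
    apply le_sSup
    refine ⟨_, ⟨hs0, ?_⟩, rfl⟩
    rw [eq_L hc hyD hs0]
    intro z hz hne
    have h1 := (mem_b_iff Dg y z hyD hr0).2 (TB_strict hs0 hsr hz hne)
    rw [← hcy] at h1
    refine lt_of_le_of_ne (hmin z h1.le) fun heq => ?_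
    have hzD : Dg z ≠ 0 := (hUs (hU z h1.le heq.ge)).2
    have hcz := center_eq hg hr0 h1.le (fun w hw => heq ▸ hmin w hw) hzD
    have h2 := (mem_b_iff Dg z z hzD hr0).1 (hcz ▸ h1)
    simp at h2
  · have hyc := (hyb'.trans_lt hrt)
    refine hL y ((mem_cb_iff Dg y₀ y hy ht).1 hyc.le) ?_
    rintro rfl
    have h2 := (mem_b_iff Dg y y hy ht).1 hyc
    simp at h2

theorem limsup_termination_times_on_Hplus {n : ℕ} (hn : 0 < n) (g : Euc n → ℝ) (Dg : Euc n → Euc n)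
    (hg : ∀ y, HasGradientAt g (Dg y) y) (hDg : Continuous Dg)
    (y₀ : Euc n) (hy : Dg y₀ ≠ 0) :
    Filter.limsup (fun y => tbar g Dg y) (𝓝[{y | g y₀ < g y}] y₀) = tbar g Dg y₀ ∧
    Filter.limsup (fun y => tsnd g Dg y) (𝓝[{y | g y₀ < g y}] y₀) = tbar g Dg y₀ := by
  have hc : Continuous g :=
    continuous_iff_continuousAt.2 fun y => (hg y).hasFDerivAt.continuousAt
  have h1 := limsup_tsnd_le hc hDg hy
  have h2 := le_limsup_tbar hc hg hDg hy
  have h3 : Filter.limsup (fun y => tbar g Dg y) (𝓝[{y | g y₀ < g y}] y₀) ≤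
      Filter.limsup (fun y => tsnd g Dg y) (𝓝[{y | g y₀ < g y}] y₀) := by
    refine limsup_le_limsup ?_ (by isBoundedDefault) (by isBoundedDefault)
    have ev : ∀ᶠ y in 𝓝 y₀, Dg y ≠ 0 := hDg.continuousAt.eventually_ne hy
    filter_upwards [ev.filter_mono nhdsWithin_le_nhds] with y hyy
    exact tbar_le_tsnd hc hyy
  exact ⟨le_antisymm (h3.trans h1) h2, le_antisymm h1 (h2.trans h3)⟩
end
end

section
/- Let y₀ ∈ ℝⁿ with Dg(y₀) ≠ 0 and suppose liminf_{y → y₀} t̄ₛ(y) < t̄ₛ(y₀) (liminf in [0,∞] along the punctured neighborhood filter of y₀; t̄ₛ(y₀) may be ∞). Then for every real t₀ with liminf_{y → y₀} t̄ₛ(y) < t₀ < t̄ₛ(y₀), setting x₀ = X(y₀,t₀), for every ε > 0 there exists x_ε with |x_ε − x₀| ≤ ε such that u is not (Fréchet) differentiable at (x_ε, t₀). -/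
open scoped InnerProductSpace Topology ENNReal
open Filter

noncomputable section

lemma aux_cont {n : ℕ} {g : Euc n → ℝ} (hg : Continuous g) (t : ℝ) :
    Continuous (fun x => HLu g x t) := by
  have h := (isCompact_closedBall (0 : Euc n) t).continuous_sInf
    (f := fun x z => g (x + z)) (by fun_prop)
  convert h using 2 with x
  unfold HLu
  congr 1
  ext r
  constructor
  · rintro ⟨y, hy, rfl⟩
    refine ⟨y - x, ?_, by simp⟩
    simpa [dist_eq_norm] using hy
  · rintro ⟨z, hz, rfl⟩
    refine ⟨x + z, ?_, rfl⟩
    simpa [dist_eq_norm] using hz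

lemma aux_le {n : ℕ} {g : Euc n → ℝ} (hg : Continuous g) {x : Euc n} {t : ℝ} {z : Euc n}
    (hz : ‖z - x‖ ≤ t) : HLu g x t ≤ g z := by
  apply csInf_le
  · exact ((isCompact_closedBall x t).image hg).bddBelow
  · exact ⟨z, by simpa [dist_eq_norm] using hz, rfl⟩

lemma aux_iff {n : ℕ} {g : Euc n → ℝ} (hg : Continuous g) {x : Euc n} {t : ℝ} {y : Euc n} :
    y ∈ HLL g x t ↔ ‖y - x‖ ≤ t ∧ ∀ z, ‖z - x‖ ≤ t → g y ≤ g z := by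
  constructor
  · rintro ⟨h1, h2⟩
    exact ⟨h1, fun z hz => h2 ▸ aux_le hg hz⟩
  · rintro ⟨h1, h2⟩
    refine ⟨h1, le_antisymm ?_ (aux_le hg h1)⟩
    apply le_csInf
    · exact ⟨g y, y, by simpa [dist_eq_norm] using h1, rfl⟩
    · rintro _ ⟨z, hz, rfl⟩
      exact h2 z (by simpa [dist_eq_norm] using hz)

lemma aux_nonempty {n : ℕ} {g : Euc n → ℝ} (hg : Continuous g) (x : Euc n) {t : ℝ} (ht : 0 ≤ t) :
    (HLL g x t).Nonempty := by
  obtain ⟨y, hy, hm⟩ := (isCompact_closedBall x t).exists_isMinOn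
    ⟨x, Metric.mem_closedBall_self ht⟩ hg.continuousOn
  refine ⟨y, (aux_iff hg).2 ⟨by simpa [dist_eq_norm] using hy, fun z hz => ?_⟩⟩
  exact hm (by simpa [dist_eq_norm] using hz)

lemma aux_usc {n : ℕ} {g : Euc n → ℝ} (hg : Continuous g) {x₀ y₀ : Euc n} {t : ℝ}
    (h : HLL g x₀ t = {y₀}) {U : Set (Euc n)} (hU : U ∈ 𝓝 y₀) :
    ∀ᶠ x in 𝓝 x₀, HLL g x t ⊆ U := by
  have hu := aux_cont hg t
  have key : ∀ᶠ x in 𝓝 x₀, ∀ z ∈ Metric.closedBall (0 : Euc n) t,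
      g (x + z) = HLu g x t → x + z ∈ U := by
    apply (isCompact_closedBall (0 : Euc n) t).eventually_forall_of_forall_eventually
    intro z hz
    by_cases hc : g (x₀ + z) = HLu g x₀ t
    · have hm : x₀ + z ∈ HLL g x₀ t := ⟨by simpa using hz, hc⟩
      rw [h] at hm
      have hm' : x₀ + z = y₀ := hm
      have hcont : ContinuousAt (fun p : Euc n × Euc n => p.1 + p.2) (x₀, z) := by fun_prop
      have : ∀ᶠ p in 𝓝 (x₀, z), p.1 + p.2 ∈ U := hcont (by simpa [hm'] using hU)
      filter_upwards [this] with p hp _ using hp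
    · have hcont : ContinuousAt (fun p : Euc n × Euc n => g (p.1 + p.2) - HLu g p.1 t) (x₀, z) := by
        fun_prop
      have : ∀ᶠ p in 𝓝 (x₀, z), g (p.1 + p.2) - HLu g p.1 t ≠ 0 :=
        hcont.eventually_ne (sub_ne_zero.2 hc)
      filter_upwards [this] with p hp h2 using absurd (sub_eq_zero.2 h2) hp
  filter_upwards [key] with x hx y hy
  have := hx (y - x) (by simpa using hy.1) (by simpa using hy.2)
  simpa using this

lemma aux_lagrange {n : ℕ} {f : Euc n → ℝ} (hf : Continuous f) {x y p : Euc n} {t : ℝ} (ht : 0 < t)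
    (hy : y ∈ HLL f x t) (hp : HasGradientAt f p y) (hp0 : p ≠ 0) :
    x = y + t • (‖p‖⁻¹ • p) := by
  obtain ⟨h1, h2⟩ := (aux_iff hf).1 hy
  have hn : 0 < ‖p‖ := norm_pos_iff.2 hp0
  set q := ‖p‖⁻¹ • p with hq
  have hqn : ‖q‖ = 1 := by rw [hq, norm_smul, norm_inv, norm_norm, inv_mul_cancel₀ hn.ne']
  have hpq : p = ‖p‖ • q := by rw [hq, smul_smul, mul_inv_cancel₀ hn.ne', one_smul]
  have hz : x - t • q ∈ Metric.closedBall x t := by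
    simp [dist_eq_norm, norm_smul, hqn, abs_of_pos ht]
  have hmin : IsLocalMinOn f (Metric.closedBall x t) y := by
    apply IsMinOn.localize
    intro z hz
    exact h2 z (by simpa [dist_eq_norm] using hz)
  have hyb : y ∈ Metric.closedBall x t := by simpa [dist_eq_norm] using h1
  have hpos := hmin.hasFDerivWithinAt_nonneg hp.hasFDerivAt.hasFDerivWithinAt
    (sub_mem_posTangentConeAt_of_segment_subset ((convex_closedBall x t).segment_subset hyb hz))
  have hpos' : 0 ≤ ⟪p, x - t • q - y⟫_ℝ := by simpa using hpos
  have h3 : 0 ≤ ⟪q, x - y⟫_ℝ - t := by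
    have e : ⟪p, x - t • q - y⟫_ℝ = ‖p‖ * (⟪q, x - y⟫_ℝ - t) := by
      have : x - t • q - y = (x - y) - t • q := by abel
      rw [this]
      conv_lhs => rw [hpq]
      rw [real_inner_smul_left, inner_sub_right, real_inner_smul_right, real_inner_self_eq_norm_sq,
        hqn]
      ring
    rw [e] at hpos'
    exact nonneg_of_mul_nonneg_right hpos' hn
  have h4 : ‖(x - y) - t • q‖ ^ 2 ≤ 0 := by
    rw [norm_sub_sq_real, real_inner_smul_right, norm_smul, hqn, real_inner_comm,
      Real.norm_of_nonneg ht.le]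
    have : ‖x - y‖ ≤ t := by rwa [norm_sub_rev]
    nlinarith [norm_nonneg (x - y)]
  have h5 : (x - y) - t • q = 0 := by
    rw [← norm_eq_zero]
    exact pow_eq_zero_iff (two_ne_zero) |>.1 (le_antisymm h4 (by positivity))
  rw [sub_eq_zero] at h5
  rw [← h5]; abel

lemma aux_grad {n : ℕ} {g : Euc n → ℝ} (hg : Continuous g) {x y p q : Euc n} {t : ℝ}
    (hy : y ∈ HLL g x t) (hp : HasGradientAt g p y)
    (hq : HasGradientAt (fun x => HLu g x t) q x) : q = p := by
  have h1 : HasFDerivAt (fun h : Euc n => g (y + h)) (InnerProductSpace.toDual ℝ (Euc n) p) 0 := by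
    have h : HasFDerivAt g (InnerProductSpace.toDual ℝ (Euc n) p) (y + 0) := by
      simpa using hp.hasFDerivAt
    exact (hasFDerivAt_comp_add_left y).2 h
  have h2 : HasFDerivAt (fun h : Euc n => HLu g (x + h) t)
      (InnerProductSpace.toDual ℝ (Euc n) q) 0 := by
    have h : HasFDerivAt (fun x => HLu g x t) (InnerProductSpace.toDual ℝ (Euc n) q) (x + 0) := by
      simpa using hq.hasFDerivAt
    exact (hasFDerivAt_comp_add_left x).2 h
  have hmin : IsLocalMin (fun h : Euc n => g (y + h) - HLu g (x + h) t) 0 := by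
    refine Filter.Eventually.of_forall fun h => ?_
    have : HLu g (x + h) t ≤ g (y + h) := aux_le hg (by simpa using hy.1)
    simp only [add_zero, hy.2]
    linarith
  have h0 := hmin.hasFDerivAt_eq_zero (h1.sub h2)
  rw [← map_sub, map_eq_zero_iff _ (InnerProductSpace.toDual ℝ (Euc n)).injective,
    sub_eq_zero] at h0
  exact h0.symm

lemma aux_singleton {n : ℕ} {g : Euc n → ℝ} (hg : Continuous g) {Dg : Euc n → Euc n} {y₀ : Euc n}
    (hy : Dg y₀ ≠ 0) {t₀ : ℝ} (ht : 0 < t₀) (h : ENNReal.ofReal t₀ < tbar g Dg y₀) :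
    HLL g (charX Dg y₀ t₀) t₀ = {y₀} := by
  obtain ⟨_, ⟨t₁, ⟨ht₁, hL⟩, rfl⟩, hlt⟩ := lt_sSup_iff.1 h
  have hlt' : t₀ < t₁ := (ENNReal.ofReal_lt_ofReal_iff ht₁).1 hlt
  have hqn : ‖‖Dg y₀‖⁻¹ • Dg y₀‖ = 1 := by
    rw [norm_smul, norm_inv, norm_norm, inv_mul_cancel₀ (norm_pos_iff.2 hy).ne']
  have hmem : y₀ ∈ HLL g (charX Dg y₀ t₁) t₁ := by rw [hL]; rfl
  have hsub : ∀ z, ‖z - charX Dg y₀ t₀‖ ≤ t₀ → ‖z - charX Dg y₀ t₁‖ ≤ t₁ := by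
    intro z hz
    have : z - charX Dg y₀ t₁ = (z - charX Dg y₀ t₀) + (t₀ - t₁) • (‖Dg y₀‖⁻¹ • Dg y₀) := by
      unfold charX
      rw [sub_smul]; abel
    rw [this]
    refine (norm_add_le _ _).trans ?_
    rw [norm_smul, hqn, Real.norm_eq_abs, abs_of_neg (by linarith)]
    linarith
  obtain ⟨_, h2⟩ := (aux_iff hg).1 hmem
  have hmem0 : y₀ ∈ HLL g (charX Dg y₀ t₀) t₀ := by
    refine (aux_iff hg).2 ⟨?_, fun z hz => h2 z (hsub z hz)⟩
    simp only [charX, sub_add_cancel_left, norm_neg]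
    rw [norm_smul, hqn, Real.norm_of_nonneg ht.le, mul_one]
  apply Set.eq_singleton_iff_unique_mem.2 ⟨hmem0, fun z hz => ?_⟩
  have : z ∈ HLL g (charX Dg y₀ t₁) t₁ := ⟨hsub z hz.1, by
    rw [hz.2, ← hmem0.2, hmem.2]⟩
  rw [hL] at this
  exact this

theorem nondifferentiable_points_near_characteristic_of_liminf_lt {n : ℕ} (hn : 0 < n) (g : Euc n → ℝ) (Dg : Euc n → Euc n)
    (hg : ∀ y, HasGradientAt g (Dg y) y) (hDg : Continuous Dg)
    (y₀ : Euc n) (hy : Dg y₀ ≠ 0)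
    (hlt : Filter.liminf (fun y => tbar g Dg y) (𝓝[≠] y₀) < tbar g Dg y₀) :
    ∀ t₀ : ℝ, Filter.liminf (fun y => tbar g Dg y) (𝓝[≠] y₀) < ENNReal.ofReal t₀ →
      ENNReal.ofReal t₀ < tbar g Dg y₀ →
      ∀ ε : ℝ, 0 < ε → ∃ xε : Euc n, ‖xε - charX Dg y₀ t₀‖ ≤ ε ∧
        ¬ DifferentiableAt ℝ (fun p : Euc n × ℝ => HLu g p.1 p.2) (xε, t₀) := by
  intro t₀ h1 h2 ε hε
  by_contra! hcon
  have ht : 0 < t₀ := by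
    by_contra! h
    rw [ENNReal.ofReal_of_nonpos h] at h1
    exact not_lt_bot h1
  have hgc : Continuous g := continuous_iff_continuousAt.2 fun y => (hg y).continuousAt
  have huc := aux_cont hgc t₀
  set x₀ := charX Dg y₀ t₀ with hx₀
  have hL : HLL g x₀ t₀ = {y₀} := aux_singleton hgc hy ht h2
  have hy₀ : y₀ ∈ HLL g x₀ t₀ := by rw [hL]; rfl
  -- good set of `x`
  have hU : {y | Dg y ≠ 0} ∈ 𝓝 y₀ := hDg.continuousAt.eventually_ne hy
  have hV : {x | HLL g x t₀ ⊆ {y | Dg y ≠ 0}} ∩ Metric.closedBall x₀ ε ∈ 𝓝 x₀ :=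
    inter_mem (aux_usc hgc hL hU) (Metric.closedBall_mem_nhds _ hε)
  have hnc : Continuous (fun x => - HLu g x t₀) := huc.neg
  -- unique maximizer
  have hM : HLL (fun x => - HLu g x t₀) y₀ t₀ = {x₀} := by
    have hle : ∀ z, ‖z - y₀‖ ≤ t₀ → HLu g z t₀ ≤ g y₀ := fun z hz =>
      aux_le hgc (by rwa [norm_sub_rev])
    have hx : x₀ ∈ HLL (fun x => - HLu g x t₀) y₀ t₀ := by
      refine (aux_iff hnc).2 ⟨by rw [norm_sub_rev]; exact hy₀.1, fun z hz => ?_⟩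
      rw [← hy₀.2]
      exact neg_le_neg (hle z hz)
    refine Set.eq_singleton_iff_unique_mem.2 ⟨hx, fun z hz => ?_⟩
    have hz2 : g y₀ = HLu g z t₀ := by
      have e : - HLu g z t₀ = - HLu g x₀ t₀ := hz.2.trans hx.2.symm
      rw [hy₀.2]; linarith
    have hzL : y₀ ∈ HLL g z t₀ := ⟨by rw [norm_sub_rev]; exact hz.1, hz2⟩
    exact aux_lagrange hgc ht hzL (hg y₀) hy
  have hev : ∀ᶠ y in 𝓝 y₀, ENNReal.ofReal t₀ ≤ tbar g Dg y := by
    filter_upwards [aux_usc hnc hM hV] with y hyV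
    obtain ⟨x, hx⟩ := aux_nonempty hnc y ht.le
    obtain ⟨hxU, hxb⟩ := hyV hx
    have hd := hcon x (by simpa [dist_eq_norm] using hxb)
    have hd' : DifferentiableAt ℝ (fun x => HLu g x t₀) x := by
      have hi : DifferentiableAt ℝ (fun x : Euc n => (x, t₀)) x := by fun_prop
      exact DifferentiableAt.comp (f := fun x : Euc n => (x, t₀)) x hd hi
    have hq := hd'.hasGradientAt
    set q := gradient (fun x => HLu g x t₀) x
    have hgrad : ∀ z ∈ HLL g x t₀, q = Dg z := fun z hz => aux_grad hgc hz (hg z) hq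
    obtain ⟨z, hz⟩ := aux_nonempty hgc x ht.le
    have hq0 : q ≠ 0 := by rw [hgrad z hz]; exact hxU hz
    have hxz : ∀ z ∈ HLL g x t₀, x = z + t₀ • (‖q‖⁻¹ • q) := fun z hz =>
      aux_lagrange hgc ht hz (by rw [hgrad z hz]; exact hg z) hq0
    have hnq : HasGradientAt (fun x => - HLu g x t₀) (-q) x := by
      have := hq.hasFDerivAt.neg
      rw [← map_neg] at this
      exact this
    have hyx := aux_lagrange hnc ht hx hnq (neg_ne_zero.2 hq0)
    rw [norm_neg, smul_neg, smul_neg] at hyx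
    have hall : ∀ z ∈ HLL g x t₀, z = y := by
      intro z hz
      rw [hyx]
      conv_rhs => rw [hxz z hz]
      abel
    have hzy := hall z hz
    subst hzy
    have hX : charX Dg z t₀ = x := by
      rw [hxz z hz, hgrad z hz]; rfl
    apply le_sSup
    refine ⟨t₀, ⟨ht, ?_⟩, rfl⟩
    rw [hX]
    exact Set.eq_singleton_iff_unique_mem.2 ⟨hz, hall⟩
  exact absurd h1 (not_lt.2 (le_liminf_of_le (by isBoundedDefault)
    (hev.filter_mono nhdsWithin_le_nhds)))
end
end
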